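/- Let A be a unital C*-algebra with a closed two-sided ideal I. If I admits a faithful positive bounded trace and A/I admits a faithful tracial state, then A admits a separating family of tracial states (i.e., for every nonzero positive a ∈ A some trace on A is nonzero on a). -/

import Mathlib

/-!
A positive element `b⋆b` outside `I` is detected by the trace of `A/I` pulled back to `A`, and one
inside `I` by an extension to `A` of the trace `φ` of `I`, namely `τ a = lim φ (a e)` along an
approximate unit of `I`.  A weak-⋆ compactness argument along an ultrafilter provides the limit.

The trace property of `τ` is the point: for `0 ≤ e = t t⋆ ≤ 1` in `I` and `y = a t`, traciality on
`I` gives `φ (a⋆a e) = φ (y⋆y) = φ (yy⋆) = lim_d φ (a e a⋆ d)`, and `φ (a e a⋆ d) ≤ φ (aa⋆ d)`.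
Taking limits in `d` and then in `e` yields `τ (a⋆a) ≤ τ (aa⋆)`.
-/

open scoped ComplexOrder

/-- A *state* on a unital C*-algebra: a positive linear functional with `φ 1 = 1`. -/
def IsState {A : Type*} [CStarAlgebra A] (φ : A →L[ℂ] ℂ) : Prop :=
  φ 1 = 1 ∧ ∀ a : A, 0 ≤ φ (star a * a)

/-- A *tracial state*: a state `τ` with `τ(x*x) = τ(xx*)` for all `x`. -/
def IsTracialState {A : Type*} [CStarAlgebra A] (τ : A →L[ℂ] ℂ) : Prop :=
  IsState τ ∧ ∀ x : A, τ (star x * x) = τ (x * star x)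

open Filter Topology
open scoped CStarAlgebra

/-- A *positive bounded trace* on a possibly non-unital C*-algebra: a tracial positive continuous
functional. It is not normalized, so that traces on ideals are covered, and may be zero. -/
structure IsPositiveTrace {A : Type*} [NonUnitalCStarAlgebra A] (φ : A →L[ℂ] ℂ) : Prop where
  nonneg (x : A) : 0 ≤ φ (star x * x)
  map_star_mul_self (x : A) : φ (star x * x) = φ (x * star x)

section Functionals

theorem map_mul_comm_of_map_star_mul_self {R : Type*} [NonUnitalRing R] [StarRing R] [Module ℂ R]
    [IsScalarTower ℂ R R] [SMulCommClass ℂ R R] [StarModule ℂ R] (φ : R →ₗ[ℂ] ℂ)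
    (hφ : ∀ x, φ (star x * x) = φ (x * star x)) (x y : R) : φ (x * y) = φ (y * x) := by
  have polarized (x y : R) :
      φ (x * y) + φ (star y * star x) = φ (y * x) + φ (star x * star y) := by
    have h := hφ (star x + y)
    simp only [star_add, star_star, add_mul, mul_add, map_add] at h
    linear_combination h + hφ x - hφ y
  have h_real := polarized x y
  have h_imag := polarized (Complex.I • x) y
  simp only [star_smul, Complex.star_def, Complex.conj_I, smul_mul_assoc, mul_smul_comm, map_smul,
    smul_eq_mul] at h_imag
  refine mul_left_cancel₀ (mul_ne_zero two_ne_zero Complex.I_ne_zero) ?_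
  linear_combination Complex.I * h_real + h_imag

theorem map_star_mul_self_le_norm_sq_smul {A : Type*} [NonUnitalCStarAlgebra A] (φ : A →L[ℂ] ℂ)
    (hφ : ∀ x, 0 ≤ φ (star x * x)) (x y : A) :
    φ (star (x * y) * (x * y)) ≤ ‖x‖ ^ 2 • φ (star y * y) := by
  let _ := CStarAlgebra.spectralOrder A
  have _ := CStarAlgebra.spectralOrderedRing A
  have h_le : star (x * y) * (x * y) ≤ ‖x‖ ^ 2 • (star y * y) := by
    simpa [mul_assoc, CStarRing.norm_star_mul_self, ← sq] using
      CStarAlgebra.star_left_conjugate_le_norm_smul (a := y) (b := star x * x)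
  obtain ⟨z, hz⟩ := CStarAlgebra.nonneg_iff_eq_star_mul_self.mp (sub_nonneg.mpr h_le)
  have h_nonneg := hφ z
  rwa [← hz, map_sub, φ.map_smul_of_tower, sub_nonneg] at h_nonneg

theorem exists_strongDual_comp_eq {𝕜 E F : Type*} [RCLike 𝕜] [NormedAddCommGroup E]
    [NormedSpace 𝕜 E] [SeminormedAddCommGroup F] [NormedSpace 𝕜 F] (i : E →ₗᵢ[𝕜] F)
    (f : StrongDual 𝕜 E) : ∃ g : StrongDual 𝕜 F, ∀ x, g (i x) = f x := by
  let e := i.equivRange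
  obtain ⟨g, hg, -⟩ := exists_extension_norm_eq (LinearMap.range i.toLinearMap)
    (f ∘L (e.symm.toContinuousLinearEquiv : _ →L[𝕜] E))
  exact ⟨g, fun x ↦ (hg (e x)).trans (congrArg f (e.symm_apply_apply x))⟩

theorem exists_strongDual_tendsto_ultrafilter {α 𝕜 E : Type*} [NontriviallyNormedField 𝕜]
    [ProperSpace 𝕜] [SeminormedAddCommGroup E] [NormedSpace 𝕜 E] (U : Ultrafilter α)
    {f : α → StrongDual 𝕜 E} {r : ℝ} (hf : ∀ᶠ i in U, ‖f i‖ ≤ r) :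
    ∃ g : StrongDual 𝕜 E, ∀ x, Tendsto (fun i ↦ f i x) U (𝓝 (g x)) := by
  have h_mem : WeakDual.toStrongDual ⁻¹' Metric.closedBall 0 r ∈
      U.map fun i ↦ StrongDual.toWeakDual (f i) := by
    rw [Ultrafilter.mem_map]
    filter_upwards [hf] with i hi using by simpa using hi
  obtain ⟨g, -, hg⟩ := (WeakDual.isCompact_closedBall (0 : StrongDual 𝕜 E) r).ultrafilter_le_nhds
    _ (le_principal_iff.mpr h_mem)
  exact ⟨WeakDual.toStrongDual g, fun x ↦ ((WeakDual.eval_continuous x).tendsto g).comp hg⟩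

end Functionals

namespace IsPositiveTrace

section Basic

variable {A B : Type*} [NonUnitalCStarAlgebra A] [NonUnitalCStarAlgebra B]

theorem map_mul_comm {φ : A →L[ℂ] ℂ} (hφ : IsPositiveTrace φ) (x y : A) :
    φ (x * y) = φ (y * x) :=
  map_mul_comm_of_map_star_mul_self (φ : A →ₗ[ℂ] ℂ) hφ.map_star_mul_self x y

theorem comp_starHom {φ : B →L[ℂ] ℂ} (hφ : IsPositiveTrace φ) (f : A →⋆ₙₐ[ℂ] B) :
    IsPositiveTrace (φ ∘L (⟨(f : A →ₗ[ℂ] B), map_continuous f⟩ : A →L[ℂ] B)) where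
  nonneg x := by
    change 0 ≤ φ (f (star x * x))
    simpa [map_star] using hφ.nonneg (f x)
  map_star_mul_self x := by
    change φ (f (star x * x)) = φ (f (x * star x))
    simpa [map_star] using hφ.map_star_mul_self (f x)

end Basic

theorem exists_isTracialState_ne_zero {A : Type*} [CStarAlgebra A] {τ : A →L[ℂ] ℂ}
    (hτ : IsPositiveTrace τ) {b : A} (hb : τ (star b * b) ≠ 0) :
    ∃ σ : A →L[ℂ] ℂ, IsTracialState σ ∧ σ (star b * b) ≠ 0 := by
  have h_nonneg : 0 ≤ τ 1 := by simpa using hτ.nonneg 1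
  have h_ne : τ 1 ≠ 0 := fun h ↦ hb <| le_antisymm
    (by simpa [h] using map_star_mul_self_le_norm_sq_smul τ hτ.nonneg b 1) (hτ.nonneg b)
  refine ⟨(τ 1)⁻¹ • τ, ⟨⟨by simp [h_ne], fun a ↦ ?_⟩, fun a ↦ ?_⟩, by simp [h_ne, hb]⟩
  · exact mul_nonneg (inv_nonneg.mpr h_nonneg) (hτ.nonneg a)
  · simp [hτ.map_star_mul_self a]

section Extension

variable {A J : Type*} [NonUnitalCStarAlgebra A] [NonUnitalCStarAlgebra J] {ι : J →⋆ₙₐ[ℂ] A}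
  {φ : J →L[ℂ] ℂ} {ψ : A →L[ℂ] ℂ}

theorem map_star_mul_self_mul_mul_star (hφ : IsPositiveTrace φ) (hψ : ∀ x, ψ (ι x) = φ x)
    (hideal : ∀ (a : A) (x : J), ∃ y, ι y = a * ι x) {a : A} {t y : J} (hy : ι y = a * ι t) :
    ψ (star a * a * ι (t * star t)) = φ (star y * y) := by
  obtain ⟨z, hz⟩ := hideal (star a) y
  calc ψ (star a * a * ι (t * star t)) = ψ (ι (z * star t)) := by simp [hz, hy, map_star, mul_assoc]
    _ = ψ (ι (star t * z)) := by rw [hψ, hψ, hφ.map_mul_comm]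
    _ = ψ (ι (star y * y)) := by simp [hz, hy, map_star, mul_assoc]
    _ = φ (star y * y) := hψ _

theorem map_mul_star_mul_mul_star_le (hφ : IsPositiveTrace φ) (hψ : ∀ x, ψ (ι x) = φ x)
    (hideal : ∀ (a : A) (x : J), ∃ y, ι y = a * ι x) {a : A} {t y : J} (hy : ι y = a * ι t)
    (ht : ‖t‖ ≤ 1) (s : J) :
    φ (y * star y * (s * star s)) ≤ ψ (a * star a * ι (s * star s)) := by
  obtain ⟨u, hu⟩ := hideal (star a) s
  calc φ (y * star y * (s * star s)) = ψ (ι (star s * (y * star y * s))) := by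
        rw [hψ, hφ.map_mul_comm (star s), mul_assoc, mul_assoc, mul_assoc]
    _ = φ (star (star t * u) * (star t * u)) := by
        rw [← hψ]
        simp [hu, hy, map_star, mul_assoc]
    _ ≤ ‖star t‖ ^ 2 • φ (star u * u) := map_star_mul_self_le_norm_sq_smul φ hφ.nonneg _ _
    _ ≤ φ (star u * u) :=
        smul_le_of_le_one_left (hφ.nonneg u) (pow_le_one₀ (norm_nonneg _) (by rwa [norm_star]))
    _ = ψ (a * star a * ι (s * star s)) := by
        simpa using (hφ.map_star_mul_self_mul_mul_star hψ hideal hu).symm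

theorem of_tendsto_approximateUnit [PartialOrder J] [StarOrderedRing J] (hφ : IsPositiveTrace φ)
    (hψ : ∀ x, ψ (ι x) = φ x) (hideal : ∀ (a : A) (x : J), ∃ y, ι y = a * ι x) {l : Filter J}
    (hl : l.IsIncreasingApproximateUnit) {τ : A →L[ℂ] ℂ}
    (hτ : ∀ a, Tendsto (fun e ↦ ψ (a * ι e)) l (𝓝 (τ a))) : IsPositiveTrace τ := by
  have := hl.neBot
  have map_le (a : A) : τ (star a * a) ≤ τ (a * star a) := by
    refine le_of_tendsto (hτ _) ?_
    filter_upwards [hl.eventually_nonneg, hl.eventually_norm] with e he he_norm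
    obtain ⟨t, rfl⟩ := CStarAlgebra.nonneg_iff_eq_mul_star_self.mp he
    have ht : ‖t‖ ≤ 1 := by
      rwa [CStarRing.norm_self_mul_star, ← sq, sq_le_one_iff₀ (norm_nonneg t)] at he_norm
    obtain ⟨y, hy⟩ := hideal a t
    rw [hφ.map_star_mul_self_mul_mul_star hψ hideal hy, hφ.map_star_mul_self]
    have h_lim : Tendsto (fun d ↦ φ (y * star y * d)) l (𝓝 (φ (y * star y))) :=
      (φ.continuous.tendsto _).comp (hl.tendsto_mul_left _)
    refine le_of_tendsto_of_tendsto h_lim (hτ _) ?_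
    filter_upwards [hl.eventually_nonneg] with d hd
    obtain ⟨s, rfl⟩ := CStarAlgebra.nonneg_iff_eq_mul_star_self.mp hd
    exact hφ.map_mul_star_mul_mul_star_le hψ hideal hy ht s
  refine ⟨fun a ↦ ge_of_tendsto (hτ _) ?_,
    fun a ↦ (map_le a).antisymm (by simpa using map_le (star a))⟩
  filter_upwards [hl.eventually_nonneg] with e he
  obtain ⟨t, rfl⟩ := CStarAlgebra.nonneg_iff_eq_mul_star_self.mp he
  obtain ⟨y, hy⟩ := hideal a t
  rw [hφ.map_star_mul_self_mul_mul_star hψ hideal hy]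
  exact hφ.nonneg y

end Extension

theorem exists_extension {A J : Type*} [NonUnitalCStarAlgebra A] [NonUnitalCStarAlgebra J]
    {ι : J →⋆ₙₐ[ℂ] A} (hι : Function.Injective ι)
    (hideal : ∀ (a : A) (x : J), ∃ y, ι y = a * ι x) {φ : J →L[ℂ] ℂ} (hφ : IsPositiveTrace φ) :
    ∃ τ : A →L[ℂ] ℂ, IsPositiveTrace τ ∧ ∀ x, τ (ι x) = φ x := by
  let _ := CStarAlgebra.spectralOrder J
  have _ := CStarAlgebra.spectralOrderedRing J
  have hι_norm (x : J) : ‖ι x‖ = ‖x‖ := NonUnitalStarAlgHom.norm_map ι hι x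
  -- The extension `ψ` has no trace property on `A`; it only makes sense of `φ (a e)` for `e : J`.
  obtain ⟨ψ, hψ⟩ : ∃ ψ : A →L[ℂ] ℂ, ∀ x, ψ (ι x) = φ x :=
    exists_strongDual_comp_eq ⟨(ι : J →ₗ[ℂ] A), hι_norm⟩ φ
  let U : Ultrafilter J := Ultrafilter.of (CStarAlgebra.approximateUnit J)
  have hU : (U : Filter J) ≤ CStarAlgebra.approximateUnit J := Ultrafilter.of_le _
  have hl := CStarAlgebra.increasingApproximateUnit J
  have hUl : (U : Filter J).IsIncreasingApproximateUnit :=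
    { tendsto_mul_left := fun x ↦ (hl.tendsto_mul_left x).mono_left hU
      tendsto_mul_right := fun x ↦ (hl.tendsto_mul_right x).mono_left hU
      eventually_nonneg := hU hl.eventually_nonneg
      eventually_norm := hU hl.eventually_norm }
  let f (e : J) : StrongDual ℂ A := ψ ∘L (ContinuousLinearMap.mul ℂ A).flip (ι e)
  have hf : ∀ᶠ e in U, ‖f e‖ ≤ ‖ψ‖ := by
    filter_upwards [hUl.eventually_norm] with e he
    refine ContinuousLinearMap.opNorm_le_bound _ (norm_nonneg _) fun a ↦ ?_
    refine ψ.le_opNorm_of_le ((norm_mul_le a (ι e)).trans ?_)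
    exact mul_le_of_le_one_right (norm_nonneg a) ((hι_norm e).trans_le he)
  obtain ⟨τ, hτ⟩ := exists_strongDual_tendsto_ultrafilter U hf
  refine ⟨τ, hφ.of_tendsto_approximateUnit hψ hideal hUl hτ, fun x ↦ ?_⟩
  have h_lim : Tendsto (fun e ↦ ψ (ι x * ι e)) U (𝓝 (φ x)) := by
    simpa only [← map_mul, hψ, Function.comp_def] using
      (φ.continuous.tendsto x).comp (hUl.tendsto_mul_left x)
  exact tendsto_nhds_unique (hτ (ι x)) h_lim

end IsPositiveTrace

theorem separating_traces_of_ideal_and_quotient_general {A J Q : Type*}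
    [NonUnitalCStarAlgebra A] [NonUnitalCStarAlgebra J] [NonUnitalCStarAlgebra Q]
    {ι : J →⋆ₙₐ[ℂ] A} (hι : Function.Injective ι)
    (hideal : ∀ (a : A) (x : J), ∃ y, ι y = a * ι x)
    {q : A →⋆ₙₐ[ℂ] Q} (hker : ∀ a, q a = 0 → a ∈ Set.range ι)
    {φ : J →L[ℂ] ℂ} (hφ : IsPositiveTrace φ) (hφ_faithful : ∀ x, φ (star x * x) = 0 → x = 0)
    {σ : Q →L[ℂ] ℂ} (hσ : IsPositiveTrace σ) (hσ_faithful : ∀ x, σ (star x * x) = 0 → x = 0)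
    {b : A} (hb : b ≠ 0) : ∃ τ : A →L[ℂ] ℂ, IsPositiveTrace τ ∧ τ (star b * b) ≠ 0 := by
  by_cases hqb : q b = 0
  · obtain ⟨y, rfl⟩ := hker b hqb
    obtain ⟨τ, hτ, hτ_eq⟩ := hφ.exists_extension hι hideal
    refine ⟨τ, hτ, fun h ↦ hb ?_⟩
    rw [← map_star, ← map_mul, hτ_eq] at h
    rw [hφ_faithful y h, map_zero]
  · refine ⟨_, hσ.comp_starHom q, ?_⟩
    change σ (q (star b * b)) ≠ 0
    rw [map_mul, map_star]
    exact fun h ↦ hqb (hσ_faithful _ h)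

/-- Proposition 6.6 (iv).  `A` is a unital C*-algebra, `ι : J → A` realizes the C*-algebra
`J` as a closed two-sided ideal `I` of `A`, and `q : A → Q` realizes `Q` as the quotient
`A/I` (a surjective `*`-homomorphism with kernel `I`).  If `I` admits a faithful positive
bounded trace and `A/I` admits a faithful tracial state, then `A` admits a separating family
of tracial states: every nonzero positive element of `A` is nonzero under some tracial
state. -/
theorem separating_traces_of_ideal_and_quotient {A J Q : Type*}
    [CStarAlgebra A] [NonUnitalCStarAlgebra J] [CStarAlgebra Q]
    (ι : J →⋆ₙₐ[ℂ] A) (hiso : Isometry ι)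
    (hideal : ∀ (a : A) (x : J), (∃ y : J, ι y = a * ι x) ∧ (∃ y : J, ι y = ι x * a))
    (q : A →⋆ₐ[ℂ] Q) (hq : Function.Surjective q)
    (hker : ∀ a : A, q a = 0 ↔ a ∈ Set.range ι)
    (φ : J →L[ℂ] ℂ)
    (hpos : ∀ x : J, 0 ≤ φ (star x * x))
    (htr : ∀ x : J, φ (star x * x) = φ (x * star x))
    (hfaith : ∀ x : J, φ (star x * x) = 0 → x = 0)
    (τQ : Q →L[ℂ] ℂ) (hτQ : IsTracialState τQ)
    (hτQfaith : ∀ b : Q, b ≠ 0 → (∃ c : Q, b = star c * c) → 0 < τQ b) :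
    ∀ a : A, a ≠ 0 → (∃ b : A, a = star b * b) →
      ∃ τ : A →L[ℂ] ℂ, IsTracialState τ ∧ τ a ≠ 0 := by
  rintro a ha ⟨b, rfl⟩
  have hτQ_faithful (c : Q) (hc : τQ (star c * c) = 0) : c = 0 := by
    by_contra h
    exact (hτQfaith _ (by simpa using h) ⟨c, rfl⟩).ne' hc
  obtain ⟨τ, hτ, hτb⟩ := separating_traces_of_ideal_and_quotient_general hiso.injective
    (fun a x ↦ (hideal a x).1) (q := (q : A →⋆ₙₐ[ℂ] Q)) (fun a ↦ (hker a).mp) ⟨hpos, htr⟩ hfaith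
    ⟨hτQ.1.2, hτQ.2⟩ hτQ_faithful (right_ne_zero_of_mul ha)
  exact hτ.exists_isTracialState_ne_zero hτb
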